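/- Let S : ℕ → ℝ≥0 satisfy S(t) ≤ (1 − C₃γ_t)S(t−1) + C₂²γ_t² + 2(1 − C₃γ_t)M_t² for all t ≥ 1, where γ_t = cq^{t−1}, M_t = K p^{t−1} with constants C₂, C₃, c, K > 0, 0 < q < p < 1, 0 ≤ C₃γ_t ≤ 1 for all t, and S(0) ≤ 2C₁. Then limsup_{t→∞} S(t) ≤ 2C₁e^{−C₃c/(1−q)} + C₂²c²/(1−q²) + 2K²/(1−p²). -/

import Mathlib

open Filter

theorem stmt12 (C₁ C₂ C₃ c K q p : ℝ)
    (hC₁ : 0 < C₁) (hC₂ : 0 < C₂) (hC₃ : 0 < C₃) (hc : 0 < c) (hK : 0 < K)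
    (hq : 0 < q) (hqp : q < p) (hp : p < 1)
    (γ M : ℕ → ℝ)
    (hγ : ∀ t, γ t = c * q ^ (t - 1)) (hM : ∀ t, M t = K * p ^ (t - 1))
    (hγbound : ∀ t, 0 ≤ C₃ * γ t ∧ C₃ * γ t ≤ 1)
    (S : ℕ → ℝ) (hSnonneg : ∀ t, 0 ≤ S t)
    (hS0 : S 0 ≤ 2 * C₁)
    (hrec : ∀ t : ℕ, 1 ≤ t →
      S t ≤ (1 - C₃ * γ t) * S (t - 1) + C₂ ^ 2 * γ t ^ 2
            + 2 * (1 - C₃ * γ t) * M t ^ 2) :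
    limsup S atTop ≤
      2 * C₁ * Real.exp (-C₃ * c / (1 - q)) + C₂ ^ 2 * c ^ 2 / (1 - q ^ 2)
        + 2 * K ^ 2 / (1 - p ^ 2) := by
  have hq1 : 0 < 1 - q := by linarith
  have hp0 : 0 < p := by linarith
  have hq2 : 0 < 1 - q ^ 2 := by nlinarith
  have hp2 : 0 < 1 - p ^ 2 := by nlinarith
  obtain ⟨E, hE⟩ : ∃ E, E = C₃ * c / (1 - q) := ⟨_, rfl⟩
  obtain ⟨A, hA⟩ : ∃ A, A = C₂ ^ 2 * c ^ 2 / (1 - q ^ 2) := ⟨_, rfl⟩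
  obtain ⟨B, hB⟩ : ∃ B, B = 2 * K ^ 2 / (1 - p ^ 2) := ⟨_, rfl⟩
  have hA0 : 0 ≤ A := by rw [hA]; positivity
  have hB0 : 0 ≤ B := by rw [hB]; positivity
  have hE' : E * (1 - q) = C₃ * c := by rw [hE]; field_simp
  have hA' : A * (1 - q ^ 2) = C₂ ^ 2 * c ^ 2 := by rw [hA]; field_simp
  have hB' : B * (1 - p ^ 2) = 2 * K ^ 2 := by rw [hB]; field_simp
  have key : ∀ n : ℕ, S n ≤ 2 * C₁ * Real.exp (-(E * (1 - q ^ n)))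
      + A * (1 - (q ^ 2) ^ n) + B * (1 - (p ^ 2) ^ n) := by
    intro n
    induction n with
    | zero => simpa using hS0
    | succ n ih =>
      have h := hrec (n + 1) (by omega)
      obtain ⟨b0, b1⟩ := hγbound (n + 1)
      simp only [hγ, hM, Nat.add_sub_cancel] at h b0 b1
      obtain ⟨a, ha⟩ : ∃ a, a = 1 - C₃ * (c * q ^ n) := ⟨_, rfl⟩
      rw [← ha] at h
      have ha0 : 0 ≤ a := by linarith
      have ha1 : a ≤ 1 := by linarith
      have hexp : a ≤ Real.exp (-(C₃ * (c * q ^ n))) := by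
        have := Real.add_one_le_exp (-(C₃ * (c * q ^ n)))
        linarith
      have hX : a * Real.exp (-(E * (1 - q ^ n))) ≤ Real.exp (-(E * (1 - q ^ (n + 1)))) := by
        calc _ ≤ Real.exp (-(C₃ * (c * q ^ n))) * Real.exp (-(E * (1 - q ^ n))) := by gcongr
          _ = _ := by
            rw [← Real.exp_add]
            congr 1
            rw [pow_succ]
            linear_combination (q ^ n) * hE'
      have hX2 := mul_le_mul_of_nonneg_left hX (by positivity : 0 ≤ 2 * C₁)
      have hy : (q ^ 2) ^ n ≤ 1 := pow_le_one₀ (by positivity) (by linarith)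
      have hz : (p ^ 2) ^ n ≤ 1 := pow_le_one₀ (by positivity) (by linarith)
      have hY : a * (A * (1 - (q ^ 2) ^ n)) ≤ A * (1 - (q ^ 2) ^ n) :=
        mul_le_of_le_one_left (mul_nonneg hA0 (by linarith)) ha1
      have hZ : a * (B * (1 - (p ^ 2) ^ n)) ≤ B * (1 - (p ^ 2) ^ n) :=
        mul_le_of_le_one_left (mul_nonneg hB0 (by linarith)) ha1
      have hW : a * (2 * K ^ 2 * (p ^ 2) ^ n) ≤ 2 * K ^ 2 * (p ^ 2) ^ n :=
        mul_le_of_le_one_left (by positivity) ha1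
      have hI := mul_le_mul_of_nonneg_left ih ha0
      have e1 : C₂ ^ 2 * (c * q ^ n) ^ 2 = A * (1 - q ^ 2) * (q ^ 2) ^ n := by
        rw [hA']; ring
      have e2 : 2 * a * (K * p ^ n) ^ 2 = a * (2 * K ^ 2 * (p ^ 2) ^ n) := by ring
      rw [e1, e2] at h
      rw [← hB'] at h hW
      rw [pow_succ (q ^ 2), pow_succ (p ^ 2)]
      linarith
  have lim : Tendsto (fun n : ℕ => 2 * C₁ * Real.exp (-(E * (1 - q ^ n)))
      + A * (1 - (q ^ 2) ^ n) + B * (1 - (p ^ 2) ^ n)) atTop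
      (nhds (2 * C₁ * Real.exp (-(E * (1 - 0))) + A * (1 - 0) + B * (1 - 0))) := by
    have t1 := tendsto_pow_atTop_nhds_zero_of_lt_one hq.le (by linarith : q < 1)
    have t2 := tendsto_pow_atTop_nhds_zero_of_lt_one (sq_nonneg q) (by linarith : q ^ 2 < 1)
    have t3 := tendsto_pow_atTop_nhds_zero_of_lt_one (sq_nonneg p) (by linarith : p ^ 2 < 1)
    exact ((((Real.continuous_exp.tendsto _).comp
      ((t1.const_sub 1).const_mul E).neg).const_mul _).add
      ((t2.const_sub 1).const_mul A)).add ((t3.const_sub 1).const_mul B)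
  have hle := limsup_le_limsup (Eventually.of_forall key)
    (isCoboundedUnder_le_of_le atTop hSnonneg) lim.isBoundedUnder_le
  rw [lim.limsup_eq] at hle
  have e : -C₃ * c / (1 - q) = -(E * (1 - 0)) := by rw [hE]; ring
  rw [e, ← hA, ← hB]
  simpa using hle
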